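/- arXiv:1411.7763 — 2 statements merged into one kernel-verified Lean document; each statement's English description precedes it below -/
import Mathlib

section
/- For all (b,c) ∈ ℤ_{≥0}², with φ_{b,c} = 3b(b−1) + 2c(3c−2) + 8bc, every coefficient of q^{−φ_{b,c}}·Q_{b,c} lies in the subring ℤ[q^{−2}] of K = ℚ(q); equivalently, every coefficient of Q_{b,c} is an integer polynomial in q² of q-degree at most φ_{b,c}. -/
noncomputable section

open MvPolynomial

/-- The field `K = ℚ(q)` of rational functions in `q` over `ℚ`. -/
abbrev K : Type := RatFunc ℚ

/-- The variable `q ∈ K = ℚ(q)`. -/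
def q : K := RatFunc.X

/-- The polynomial ring `K[x,y,z,w]`. -/
abbrev P4 : Type := MvPolynomial (Fin 4) K

def xP : P4 := X 0
def yP : P4 := X 1
def zP : P4 := X 2
def wP : P4 := X 3

/-- The `K`-algebra map `K[x,y,z,w] → K[x,y,z,w]` rescaling the variables:
`x ↦ q^a·x`, `y ↦ q^b·y`, `z ↦ q^c·z`, `w ↦ q^d·w`. -/
def scl (a b c d : ℤ) : P4 →ₐ[K] P4 :=
  aeval ![C (q ^ a) * X 0, C (q ^ b) * X 1, C (q ^ c) * X 2, C (q ^ d) * X 3]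

/-- The polynomials `Q_{b,0}(x,y,z,w)`, defined by the recursion (rec1) of the paper. -/
def Qb0 : ℕ → P4
  | 0 => 1
  | b + 1 =>
      C (q ^ (4 * (b : ℤ))) * wP * yP * (zP - 1) * scl 0 0 (-4) 0 (Qb0 b)
    + C (q ^ (4 * (b : ℤ))) * wP * xP * (yP - 1) * yP * zP * scl 0 (-2) 0 0 (Qb0 b)
    + C (q ^ (6 * (b : ℤ))) * (wP - 1) * (yP - 1) * scl 0 (-2) 0 (-2) (Qb0 b)
    + C (q ^ (4 * (b : ℤ))) * wP * (xP - 1) * yP * (zP - 1) * scl (-4) 2 (-4) 0 (Qb0 b)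
    + C (q ^ (6 * (b : ℤ))) * (wP - 1) * (xP - 1) * yP * scl (-4) 0 0 (-2) (Qb0 b)

/-- The polynomials `Q_{b,c}(x,y,z,w)`: for `c ≥ 1` they are defined by the
recursion (rec2) of the paper, lowering `c`; for `c = 0` by `Qb0`. -/
def Q : ℕ → ℕ → P4
  | b, 0 => Qb0 b
  | b, c + 1 =>
      - (C (q ^ (4 * (b : ℤ) + 8 * (c : ℤ))) * wP ^ 2 * yP * (zP - 1) * zP)
          * scl 0 0 (-4) 0 (Q b c)
    + (C (q ^ (4 * (b : ℤ) + 4 * (c : ℤ) - 2)) * wP * xP * (yP - 1) * zP)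
          * (C (q ^ (2 * (b : ℤ) + 4 * (c : ℤ) + 4)) - C (q ^ (2 : ℤ)) * wP * yP * zP)
          * scl 0 (-2) 0 0 (Q b c)
    - (C (q ^ (6 * (b : ℤ) + 8 * (c : ℤ))) * (wP - 1) * wP * (yP - 1) * zP)
          * scl 0 (-2) 0 (-2) (Q b c)
    + (C (q ^ (4 * (b : ℤ) + 8 * (c : ℤ) - 2)) * wP * (xP - 1) * (zP - 1))
          * (C (q ^ (2 * (b : ℤ) + 4 * (c : ℤ) + 4)) - C (q ^ (2 : ℤ)) * wP * yP * zP)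
          * scl (-4) 2 (-4) 0 (Q b c)
    + (C (q ^ (6 * (b : ℤ) + 8 * (c : ℤ) - 2)) * (wP - 1) * (xP - 1))
          * (C (q ^ (2 * (b : ℤ) + 4 * (c : ℤ) + 4)) - C (q ^ (2 : ℤ)) * wP * yP * zP)
          * scl (-4) 0 0 (-2) (Q b c)

/-- The coefficient ring `ℤ[q⁻²]`. -/
def RR : Subring K := Subring.closure {q ^ (-2 : ℤ)}

/-- Support condition `j ≤ n + 2i + 2k` together with the degree bound `d` on coefficients. -/
def Good (n d : ℤ) (p : P4) : Prop :=
  ∀ m, (coeff m p ≠ 0 → (m 1 : ℤ) ≤ n + 2 * (m 0 : ℤ) + 2 * (m 2 : ℤ)) ∧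
    q ^ (-d) * coeff m p ∈ RR

theorem q_ne : (q : K) ≠ 0 := RatFunc.X_ne_zero

theorem qpow_mem (k : ℤ) (hk : 0 ≤ k) : q ^ (-(2 * k)) ∈ RR := by
  lift k to ℕ using hk
  have h : q ^ (-(2 * (k : ℤ))) = (q ^ (-2 : ℤ)) ^ k := by
    rw [← zpow_natCast, ← zpow_mul, neg_mul]
  rw [h]
  exact pow_mem (Subring.subset_closure (Set.mem_singleton _)) k

theorem Good.mono {n d n' d' : ℤ} {p : P4} (h : Good n d p) (k : ℤ) (hk : 0 ≤ k)
    (hn : n ≤ n') (hd : d' = d + 2 * k) : Good n' d' p := by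
  intro m
  refine ⟨fun hm => by have := (h m).1 hm; omega, ?_⟩
  have e : q ^ (-d') * coeff m p = q ^ (-(2 * k)) * (q ^ (-d) * coeff m p) := by
    rw [← mul_assoc, ← zpow_add₀ q_ne]; congr 2; omega
  rw [e]
  exact mul_mem (qpow_mem k hk) (h m).2

theorem Good.add {n d : ℤ} {p r : P4} (hp : Good n d p) (hr : Good n d r) :
    Good n d (p + r) := by
  intro m
  rw [coeff_add]
  refine ⟨fun h => ?_, ?_⟩
  · by_cases h0 : coeff m p = 0
    · exact (hr m).1 (by simpa [h0] using h)
    · exact (hp m).1 h0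
  · rw [mul_add]; exact add_mem (hp m).2 (hr m).2

theorem Good.neg {n d : ℤ} {p : P4} (hp : Good n d p) : Good n d (-p) := by
  intro m
  rw [coeff_neg]
  refine ⟨fun h => (hp m).1 (by simpa using h), ?_⟩
  rw [mul_neg]; exact neg_mem (hp m).2

theorem Good.sub {n d : ℤ} {p r : P4} (hp : Good n d p) (hr : Good n d r) :
    Good n d (p - r) := by
  rw [sub_eq_add_neg]; exact hp.add hr.neg

theorem Good.mul {n d n' d' : ℤ} {p r : P4} (hp : Good n d p) (hr : Good n' d' r) :
    Good (n + n') (d + d') (p * r) := by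
  intro m
  rw [coeff_mul]
  refine ⟨fun h => ?_, ?_⟩
  · obtain ⟨x, hx, hne⟩ := Finset.exists_ne_zero_of_sum_ne_zero h
    have h1 := (hp x.1).1 (left_ne_zero_of_mul hne)
    have h2 := (hr x.2).1 (right_ne_zero_of_mul hne)
    rw [Finset.HasAntidiagonal.mem_antidiagonal] at hx
    rw [← hx]
    simp only [Finsupp.add_apply]
    push_cast
    omega
  · rw [Finset.mul_sum]
    refine sum_mem fun x _ => ?_
    have e : q ^ (-(d + d')) * (coeff x.1 p * coeff x.2 r)
        = (q ^ (-d) * coeff x.1 p) * (q ^ (-d') * coeff x.2 r) := by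
      rw [neg_add, zpow_add₀ q_ne]; ring
    rw [e]
    exact mul_mem (hp x.1).2 (hr x.2).2

theorem good_C (e : ℤ) : Good 0 e (C (q ^ e)) := by
  classical
  intro m
  rw [coeff_C]
  split_ifs with h
  · subst h
    refine ⟨fun _ => by simp, ?_⟩
    rw [← zpow_add₀ q_ne]; simp [one_mem]
  · simp [zero_mem]

theorem good_one : Good 0 0 (1 : P4) := by
  have := good_C 0
  simpa using this

theorem good_X (i : Fin 4) (n : ℤ)
    (h : ((Finsupp.single i 1 : Fin 4 →₀ ℕ) 1 : ℤ) ≤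
      n + 2 * ((Finsupp.single i 1 : Fin 4 →₀ ℕ) 0 : ℤ)
        + 2 * ((Finsupp.single i 1 : Fin 4 →₀ ℕ) 2 : ℤ)) : Good n 0 (X i : P4) := by
  classical
  intro m
  rw [coeff_X]
  split_ifs with hm
  · subst hm
    exact ⟨fun _ => h, by simp [one_mem]⟩
  · simp [zero_mem]

theorem good_x : Good (-2) 0 xP := good_X 0 _ (by simp)
theorem good_y : Good 1 0 yP := good_X 1 _ (by simp)
theorem good_z : Good (-2) 0 zP := good_X 2 _ (by simp)
theorem good_w : Good 0 0 wP := good_X 3 _ (by simp)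

theorem good_x1 : Good 0 0 (xP - 1) :=
  (good_x.mono 0 le_rfl (by norm_num) (by norm_num)).sub good_one
theorem good_y1 : Good 1 0 (yP - 1) :=
  good_y.sub (good_one.mono 0 le_rfl (by norm_num) (by norm_num))
theorem good_z1 : Good 0 0 (zP - 1) :=
  (good_z.mono 0 le_rfl (by norm_num) (by norm_num)).sub good_one
theorem good_w1 : Good 0 0 (wP - 1) := good_w.sub good_one

theorem coeff_scl (a b c d : ℤ) (p : P4) (m : Fin 4 →₀ ℕ) :
    coeff m (scl a b c d p)
      = q ^ (a * (m 0 : ℤ) + b * (m 1 : ℤ) + c * (m 2 : ℤ) + d * (m 3 : ℤ)) * coeff m p := by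
  classical
  induction p using MvPolynomial.induction_on' with
  | monomial u r =>
    have e : scl a b c d (monomial u r) = monomial u
        (q ^ (a * (u 0 : ℤ) + b * (u 1 : ℤ) + c * (u 2 : ℤ) + d * (u 3 : ℤ)) * r) := by
      rw [scl, aeval_monomial, Finsupp.prod_fintype _ _ (by simp), monomial_eq,
        Finsupp.prod_fintype _ _ (by simp)]
      simp only [Fin.prod_univ_four, algebraMap_eq, zpow_add₀ q_ne, zpow_mul, zpow_natCast,
        C_mul, C_pow]
      simp
      ring
    rw [e, coeff_monomial, coeff_monomial]
    split_ifs with h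
    · rw [h]
    · simp
  | add p r hp hr => rw [map_add, coeff_add, hp, hr, coeff_add, mul_add]

theorem Good.scl {n d : ℤ} {p : P4} (h : Good n d p) (a b c e s : ℤ)
    (hs : ∀ x y z w : ℕ, (y : ℤ) ≤ n + 2 * x + 2 * z →
      a * x + b * y + c * z + e * w ≤ s) :
    Good n (d + 2 * s) (_root_.scl (2 * a) (2 * b) (2 * c) (2 * e) p) := by
  intro m
  rw [coeff_scl]
  refine ⟨fun hm => (h m).1 (right_ne_zero_of_mul hm), ?_⟩
  by_cases h0 : coeff m p = 0
  · simp [h0, zero_mem]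
  have h1 := hs (m 0) (m 1) (m 2) (m 3) ((h m).1 h0)
  have e1 : q ^ (-(d + 2 * s)) * (q ^ (2 * a * (m 0 : ℤ) + 2 * b * (m 1 : ℤ)
        + 2 * c * (m 2 : ℤ) + 2 * e * (m 3 : ℤ)) * coeff m p)
      = q ^ (-(2 * (s - (a * (m 0 : ℤ) + b * (m 1 : ℤ) + c * (m 2 : ℤ) + e * (m 3 : ℤ)))))
        * (q ^ (-d) * coeff m p) := by
    rw [← mul_assoc, ← mul_assoc, ← zpow_add₀ q_ne, ← zpow_add₀ q_ne]
    congr 2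
    ring
  rw [e1]
  exact mul_mem (qpow_mem _ (by linarith)) (h m).2

theorem good_s1 {n d : ℤ} {p : P4} (h : Good n d p) : Good n d (scl 0 0 (-4) 0 p) := by
  simpa using h.scl 0 0 (-2) 0 0 (by intros; omega)
theorem good_s2 {n d : ℤ} {p : P4} (h : Good n d p) : Good n d (scl 0 (-2) 0 0 p) := by
  simpa using h.scl 0 (-1) 0 0 0 (by intros; omega)
theorem good_s3 {n d : ℤ} {p : P4} (h : Good n d p) : Good n d (scl 0 (-2) 0 (-2) p) := by
  simpa using h.scl 0 (-1) 0 (-1) 0 (by intros; omega)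
theorem good_s4 {n d : ℤ} {p : P4} (h : Good n d p) :
    Good n (d + 2 * n) (scl (-4) 2 (-4) 0 p) := by
  simpa using h.scl (-2) 1 (-2) 0 n (by intros; omega)
theorem good_s5 {n d : ℤ} {p : P4} (h : Good n d p) : Good n d (scl (-4) 0 0 (-2) p) := by
  simpa using h.scl (-2) 0 0 (-1) 0 (by intros; omega)

theorem good_Qb0 (b : ℕ) : Good b (3 * (b : ℤ) * ((b : ℤ) - 1)) (Qb0 b) := by
  induction b with
  | zero => simpa [Qb0] using good_one
  | succ b ih =>
    rw [Qb0]
    refine ((((Good.add ?_ ?_).add ?_).add ?_).add ?_)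
    · exact ((((good_C _).mul good_w).mul good_y).mul good_z1 |>.mul (good_s1 ih)).mono b
        (by omega) (by push_cast; omega) (by push_cast; ring)
    · exact ((((((good_C _).mul good_w).mul good_x).mul good_y1).mul good_y).mul good_z
        |>.mul (good_s2 ih)).mono b (by omega) (by push_cast; omega) (by push_cast; ring)
    · exact (((good_C _).mul good_w1).mul good_y1 |>.mul (good_s3 ih)).mono 0
        (by omega) (by push_cast; omega) (by push_cast; ring)
    · exact (((((good_C _).mul good_w).mul good_x1).mul good_y).mul good_z1
        |>.mul (good_s4 ih)).mono 0 (by omega) (by push_cast; omega) (by push_cast; ring)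
    · exact ((((good_C _).mul good_w1).mul good_x1).mul good_y
        |>.mul (good_s5 ih)).mono 0 (by omega) (by push_cast; omega) (by push_cast; ring)

theorem good_fac (b c : ℕ) : Good 0 (2 * (b : ℤ) + 4 * (c : ℤ) + 4)
    (C (q ^ (2 * (b : ℤ) + 4 * (c : ℤ) + 4)) - C (q ^ (2 : ℤ)) * wP * yP * zP) :=
  (good_C _).sub ((((good_C _).mul good_w).mul good_y).mul good_z |>.mono (b + 2 * c + 1)
    (by omega) (by omega) (by ring))

theorem good_Q (b c : ℕ) : Good b (3 * (b : ℤ) * ((b : ℤ) - 1) + 2 * (c : ℤ) * (3 * (c : ℤ) - 2)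
          + 8 * (b : ℤ) * (c : ℤ)) (Q b c) := by
  induction c with
  | zero => simpa [Q] using good_Qb0 b
  | succ c ih =>
    rw [Q]
    refine ((((Good.add ?_ ?_).sub ?_).add ?_).add ?_)
    · rw [pow_two]
      exact (((((good_C _).mul (good_w.mul good_w)).mul good_y).mul good_z1).mul good_z
        |>.neg.mul (good_s1 ih)).mono (2 * b + 2 * c + 1)
        (by omega) (by push_cast; omega) (by push_cast; ring)
    · exact (((((good_C _).mul good_w).mul good_x).mul good_y1).mul good_z
        |>.mul (good_fac b c) |>.mul (good_s2 ih)).mono (b + 2 * c)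
        (by omega) (by push_cast; omega) (by push_cast; ring)
    · exact (((((good_C _).mul good_w1).mul good_w).mul good_y1).mul good_z
        |>.mul (good_s3 ih)).mono (b + 2 * c + 1)
        (by omega) (by push_cast; omega) (by push_cast; ring)
    · exact ((((good_C _).mul good_w).mul good_x1).mul good_z1
        |>.mul (good_fac b c) |>.mul (good_s4 ih)).mono 0
        (by omega) (by push_cast; omega) (by push_cast; ring)
    · exact (((good_C _).mul good_w1).mul good_x1
        |>.mul (good_fac b c) |>.mul (good_s5 ih)).mono 0
        (by omega) (by push_cast; omega) (by push_cast; ring)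

/-- with `φ_{b,c} = 3b(b−1) + 2c(3c−2) + 8bc`, every coefficient of
`q^{−φ_{b,c}}·Q_{b,c}` lies in the subring `ℤ[q^{−2}] ⊆ K = ℚ(q)`. -/
theorem Q_coeff_inv_mem (b c : ℕ) (m : Fin 4 →₀ ℕ) :
    q ^ (-(3 * (b : ℤ) * ((b : ℤ) - 1) + 2 * (c : ℤ) * (3 * (c : ℤ) - 2)
          + 8 * (b : ℤ) * (c : ℤ))) * MvPolynomial.coeff m (Q b c)
      ∈ Subring.closure {q ^ (-2 : ℤ)} := by
  exact (good_Q b c m).2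
end
end

section
/- For all (b,c) ∈ ℤ_{≥0}², the specialization of Q_{b,c} at z = 1 and w = 1 satisfies Q_{b,c}(x,y,1,1) = (−1)^c · x^{b+c} · y^{b} · ∏_{j=0}^{b+2c−1}(y − q^{2j}) in K[x,y]. -/
noncomputable section

open MvPolynomial

theorem q_ne_zero : q ≠ 0 := RatFunc.X_ne_zero

theorem spec_scl (P : P4) :
    aeval ![(X 0 : P4), X 1, 1, 1] (scl 0 (-2) 0 0 P)
      = scl 0 (-2) 0 0 (aeval ![(X 0 : P4), X 1, 1, 1] P) := by
  have h : (aeval ![(X 0 : P4), X 1, 1, 1]).comp (scl 0 (-2) 0 0)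
      = (scl 0 (-2) 0 0).comp (aeval ![(X 0 : P4), X 1, 1, 1]) := by
    apply MvPolynomial.algHom_ext
    intro i
    fin_cases i <;> simp [scl, MvPolynomial.algebraMap_eq]
  exact DFunLike.congr_fun h P

theorem scl_prod (n : ℕ) :
    C (q ^ (2 * (n : ℤ))) * ((X 1 : P4) - 1) *
      scl 0 (-2) 0 0 (∏ j ∈ Finset.range n, ((X 1 : P4) - C (q ^ (2 * j))))
      = ∏ j ∈ Finset.range (n + 1), ((X 1 : P4) - C (q ^ (2 * j))) := by
  have hq := q_ne_zero
  have key : ∀ j : ℕ, C (q ^ (2 : ℤ)) * scl 0 (-2) 0 0 ((X 1 : P4) - C (q ^ (2 * j)))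
      = (X 1 : P4) - C (q ^ (2 * (j + 1))) := by
    intro j
    have h1 : scl 0 (-2) 0 0 (X 1 : P4) = C (q ^ (-2 : ℤ)) * X 1 := by simp [scl]
    have h2 : scl 0 (-2) 0 0 (C (q ^ (2 * j)) : P4) = C (q ^ (2 * j)) := by
      rw [← MvPolynomial.algebraMap_eq, AlgHom.commutes]
    rw [map_sub, h1, h2, mul_sub, ← mul_assoc, ← C_mul, ← C_mul, ← zpow_add₀ hq]
    have : q ^ (2 : ℤ) * q ^ (2 * j) = q ^ (2 * (j + 1)) := by
      rw [mul_add, pow_add, mul_comm]; norm_cast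
    rw [this]
    simp
  rw [Finset.prod_range_succ', map_prod, ← Finset.prod_congr rfl (fun j _ => key j),
    Finset.prod_mul_distrib]
  have : (C (q ^ (2 * (n : ℤ))) : P4) = C (q ^ (2 : ℤ)) ^ n := by
    rw [← map_pow, ← zpow_natCast, ← zpow_mul]
  simp only [this, Finset.prod_const, Finset.card_range, mul_zero, pow_zero, C_1]
  ring

theorem scl_rhs (b c : ℕ) (R : P4) :
    scl 0 (-2) 0 0 (C ((-1 : K) ^ c) * (X 0 : P4) ^ (b + c) * (X 1 : P4) ^ b * R)
      = C ((-1 : K) ^ c) * (X 0 : P4) ^ (b + c) * (C (q ^ (-2 * (b : ℤ))) * (X 1 : P4) ^ b)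
        * scl 0 (-2) 0 0 R := by
  have h0 : scl 0 (-2) 0 0 (X 0 : P4) = X 0 := by simp [scl]
  have h1 : scl 0 (-2) 0 0 (X 1 : P4) = C (q ^ (-2 : ℤ)) * X 1 := by simp [scl]
  have h2 : scl 0 (-2) 0 0 (C ((-1 : K) ^ c) : P4) = C ((-1 : K) ^ c) := by
    rw [← MvPolynomial.algebraMap_eq, AlgHom.commutes]
  have : (C (q ^ (-2 * (b : ℤ))) : P4) = C (q ^ (-2 : ℤ)) ^ b := by
    rw [← map_pow, ← zpow_natCast, ← zpow_mul]
  simp only [map_mul, map_pow _ (X _ : P4), h0, h1, h2, this, mul_pow]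

theorem aeval_C' (v : Fin 4 → P4) (a : K) : aeval v (C a : P4) = C a := by
  rw [← MvPolynomial.algebraMap_eq, AlgHom.commutes]

theorem Qb0_spec (b : ℕ) :
    aeval ![(X 0 : P4), X 1, 1, 1] (Qb0 b) =
      C ((-1 : K) ^ 0) * (X 0 : P4) ^ (b + 0) * (X 1 : P4) ^ b
        * (∏ j ∈ Finset.range b, ((X 1 : P4) - C (q ^ (2 * j)))) := by
  induction b with
  | zero => simp [Qb0]
  | succ b ih =>
    have hx : aeval ![(X 0 : P4), X 1, 1, 1] xP = X 0 := by simp [xP]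
    have hy : aeval ![(X 0 : P4), X 1, 1, 1] yP = X 1 := by simp [yP]
    have hz : aeval ![(X 0 : P4), X 1, 1, 1] zP = 1 := by simp [zP]
    have hw : aeval ![(X 0 : P4), X 1, 1, 1] wP = 1 := by simp [wP]
    rw [Qb0]
    simp only [map_add, map_mul, map_sub, map_one, hx, hy, hz, hw, aeval_C', spec_scl]
    rw [ih, scl_rhs b 0, ← scl_prod b]
    have e : (C (q ^ (4 * (b : ℤ))) : P4) * C (q ^ (-2 * (b : ℤ))) = C (q ^ (2 * (b : ℤ))) := by
      rw [← C_mul, ← zpow_add₀ q_ne_zero]; congr 2; ring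
    rw [← e]
    ring

/-- `Q_{b,c}(x,y,1,1) = (−1)^c x^{b+c} y^{b} ∏_{j<b+2c}(y − q^{2j})`. -/
theorem Q_spec_z1w1 (b c : ℕ) :
    aeval ![(X 0 : P4), X 1, 1, 1] (Q b c) =
      C ((-1 : K) ^ c) * (X 0 : P4) ^ (b + c) * (X 1 : P4) ^ b
        * (∏ j ∈ Finset.range (b + 2 * c), ((X 1 : P4) - C (q ^ (2 * j)))) := by
  induction c with
  | zero => exact Qb0_spec b
  | succ c ih =>
    have hx : aeval ![(X 0 : P4), X 1, 1, 1] xP = X 0 := by simp [xP]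
    have hy : aeval ![(X 0 : P4), X 1, 1, 1] yP = X 1 := by simp [yP]
    have hz : aeval ![(X 0 : P4), X 1, 1, 1] zP = 1 := by simp [zP]
    have hw : aeval ![(X 0 : P4), X 1, 1, 1] wP = 1 := by simp [wP]
    rw [Q]
    simp only [map_add, map_mul, map_sub, map_neg, map_pow _ wP, map_one, hx, hy, hz, hw,
      aeval_C', spec_scl]
    rw [ih, scl_rhs b c, show b + 2 * (c + 1) = (b + 2 * c + 1) + 1 by ring,
      Finset.prod_range_succ, ← scl_prod (b + 2 * c)]
    have e : (C (q ^ (4 * (b : ℤ) + 4 * (c : ℤ) - 2)) : P4) * C (q ^ (-2 * (b : ℤ)))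
        * C (q ^ (2 : ℤ)) = C (q ^ (2 * ((b + 2 * c : ℕ) : ℤ))) := by
      rw [← C_mul, ← C_mul, ← zpow_add₀ q_ne_zero, ← zpow_add₀ q_ne_zero]
      congr 2; push_cast; ring
    have e2 : (C (q ^ (2 * (b : ℤ) + 4 * (c : ℤ) + 4)) : P4)
        = C (q ^ (2 : ℤ)) * C (q ^ (2 * (b + 2 * c + 1))) := by
      rw [← C_mul, ← zpow_natCast, ← zpow_add₀ q_ne_zero]
      congr 2; push_cast; ring
    have e3 : (C ((-1 : K) ^ (c + 1)) : P4) = - C ((-1 : K) ^ c) := by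
      rw [pow_succ, mul_neg, mul_one, C_neg]
    rw [← e, e2, e3]
    ring
end
end
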